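/- Mehta's identity: the fourth power of the Vandermonde determinant in n variables equals the determinant of the 2n×2n matrix whose columns are, for each k=1,...,n, the column (x_k^i)_{0≤i≤2n-1} and the column of derivatives (i·x_k^{i-1})_{0≤i≤2n-1}: Δ_n(x)^4 = det( x_1^i, i x_1^{i-1}, x_2^i, i x_2^{i-1}, ..., x_n^i, i x_n^{i-1} )_{0≤i≤2n-1}. -/

import Mathlib

/-- The Vandermonde determinant `Δ_n(x) = ∏_{i<j} (x_i - x_j)`. -/
def vandermondeProd {R : Type*} [CommRing R] {n : ℕ} (x : Fin n → R) : R :=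
  ∏ i : Fin n, ∏ j ∈ Finset.univ.filter (fun j => i < j), (x i - x j)

theorem mehta_half_lt {n : ℕ} (c : Fin (2 * n)) : (c : ℕ) / 2 < n := by
  have := c.isLt
  omega

/-- Index equivalence `(a, k) ↦ 2 k + a`. -/
def mehtaEquiv (n : ℕ) : Fin 2 × Fin n ≃ Fin (2 * n) where
  toFun p := ⟨2 * (p.2 : ℕ) + (p.1 : ℕ), by have := p.1.isLt; have := p.2.isLt; omega⟩
  invFun c := (⟨(c : ℕ) % 2, by omega⟩, ⟨(c : ℕ) / 2, mehta_half_lt c⟩)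
  left_inv p := by
    rcases p with ⟨⟨a, ha⟩, ⟨k, hk⟩⟩
    ext <;> simp <;> omega
  right_inv c := by
    ext; simp; omega

open Polynomial in
/-- Perturbed points. -/
noncomputable def mehtaPt {R : Type*} [CommRing R] {n : ℕ} (x : Fin n → R) (p : Fin 2 × Fin n) :
    R[X] := C (x p.2) + if p.1 = 0 then 0 else X

open Polynomial in
/-- Matrix of divided differences. -/
noncomputable def mehtaMat {R : Type*} [CommRing R] {n : ℕ} (x : Fin n → R) :
    Matrix (Fin 2 × Fin n) (Fin 2 × Fin n) R[X] :=
  Matrix.of fun p q =>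
    if q.1 = 0 then C (x q.2) ^ (mehtaEquiv n p : ℕ)
    else ∑ j ∈ Finset.range (mehtaEquiv n p : ℕ),
      (C (x q.2) + X) ^ j * C (x q.2) ^ ((mehtaEquiv n p : ℕ) - 1 - j)

open Polynomial in
theorem mehta_mul {R : Type*} [CommRing R] {n : ℕ} (x : Fin n → R) :
    (Matrix.of fun p q : Fin 2 × Fin n => mehtaPt x q ^ (mehtaEquiv n p : ℕ)) =
      mehtaMat x * Matrix.blockDiagonal (fun _ : Fin n => !![(1 : R[X]), 1; 0, X]) := by
  ext1 p q
  rcases q with ⟨b, l⟩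
  have h := (Commute.all (C (x l) + X) (C (x l))).geom_sum₂_mul (mehtaEquiv n p : ℕ)
  rw [Matrix.mul_apply, Fintype.sum_prod_type]
  fin_cases b
  · simp [Matrix.blockDiagonal_apply, mehtaPt, mehtaMat]
  · simp [Matrix.blockDiagonal_apply, mehtaPt, mehtaMat]
    rw [add_sub_cancel_left] at h
    rw [h]; ring

open Polynomial in
theorem mehta_det_pt {R : Type*} [CommRing R] {n : ℕ} (x : Fin n → R) :
    (Matrix.of fun p q : Fin 2 × Fin n => mehtaPt x q ^ (mehtaEquiv n p : ℕ)).det =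
      X ^ n * ∏ k : Fin n, ∏ l : Fin n, if k < l then
        (C (x l) - C (x k)) * (C (x l) + X - C (x k)) * (C (x l) - (C (x k) + X)) *
          (C (x l) - C (x k)) else 1 := by
  have h1 : (Matrix.of fun p q : Fin 2 × Fin n => mehtaPt x q ^ (mehtaEquiv n p : ℕ)) =
      (Matrix.vandermonde (fun c => mehtaPt x ((mehtaEquiv n).symm c))).transpose.submatrix
        (mehtaEquiv n) (mehtaEquiv n) := by
    ext1 p q
    simp [Matrix.vandermonde_apply]
  rw [h1, Matrix.det_submatrix_equiv_self, Matrix.det_transpose, Matrix.det_vandermonde]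
  have h2 : ∀ i : Fin (2 * n), ∏ j ∈ Finset.Ioi i,
      (mehtaPt x ((mehtaEquiv n).symm j) - mehtaPt x ((mehtaEquiv n).symm i)) =
      ∏ j, if i < j then
        (mehtaPt x ((mehtaEquiv n).symm j) - mehtaPt x ((mehtaEquiv n).symm i)) else 1 := by
    intro i
    rw [← Finset.prod_filter]
    congr 1
    ext; simp
  simp_rw [h2]
  rw [← (mehtaEquiv n).prod_comp]
  simp_rw [← (mehtaEquiv n).prod_comp (fun j => ite (_ < j) _ _)]
  simp only [Equiv.symm_apply_apply, Fintype.prod_prod_type, Fin.prod_univ_two]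
  simp only [← Finset.prod_mul_distrib]
  have h3 : (X : R[X]) ^ n = ∏ k : Fin n, ∏ l : Fin n, if k = l then X else 1 := by simp
  rw [h3]
  simp only [← Finset.prod_mul_distrib]
  refine Finset.prod_congr rfl fun k _ => Finset.prod_congr rfl fun l _ => ?_
  simp only [mehtaPt, mehtaEquiv, Equiv.coe_fn_mk, Fin.lt_def, Fin.ext_iff]
  rcases lt_trichotomy (k : ℕ) l with h | h | h
  · have e1 : 2 * (k : ℕ) < 2 * l := by omega
    have e2 : 2 * (k : ℕ) + 1 < 2 * l := by omega
    have e3 : 2 * (k : ℕ) < 2 * l + 1 := by omega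
    simp [h, h.ne, e2, e3]
    ring
  · have : k = l := Fin.ext h
    subst this
    simp
  · have e1 : ¬ 2 * (k : ℕ) < 2 * l := by omega
    have e2 : ¬ 2 * (k : ℕ) + 1 < 2 * l := by omega
    have e3 : ¬ 2 * (k : ℕ) < 2 * l + 1 := by omega
    have e4 : ¬ k < l := by rw [Fin.lt_def]; omega
    simp [e4, h.ne', e2, e3]

open Polynomial in
theorem mehta_det_mat {R : Type*} [CommRing R] {n : ℕ} (x : Fin n → R) :
    (mehtaMat x).det = ∏ k : Fin n, ∏ l : Fin n, if k < l then
        (C (x l) - C (x k)) * (C (x l) + X - C (x k)) * (C (x l) - (C (x k) + X)) *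
          (C (x l) - C (x k)) else 1 := by
  have h := mehta_det_pt x
  rw [mehta_mul, Matrix.det_mul, Matrix.det_blockDiagonal] at h
  simp only [Matrix.det_fin_two_of, one_mul, mul_zero, sub_zero, Finset.prod_const,
    Finset.card_univ, Fintype.card_fin] at h
  rw [mul_comm] at h
  exact (monic_X_pow n).isRegular.left h

/-- Mehta's identity: the fourth power of the Vandermonde determinant in `n` variables
equals the determinant of the `2n×2n` matrix whose columns are, for each `k`, the column
`(x_k^i)_{0≤i≤2n-1}` and the column of derivatives `(i·x_k^{i-1})_{0≤i≤2n-1}`. -/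
theorem vandermonde_pow_four_eq_det {R : Type*} [CommRing R] {n : ℕ} (x : Fin n → R) :
    (vandermondeProd x) ^ 4 =
      Matrix.det (Matrix.of fun (i c : Fin (2 * n)) =>
        if (c : ℕ) % 2 = 0 then
          x ⟨(c : ℕ) / 2, by have := c.isLt; omega⟩ ^ (i : ℕ)
        else
          ((i : ℕ) : R) * x ⟨(c : ℕ) / 2, by have := c.isLt; omega⟩ ^ ((i : ℕ) - 1)) := by
  have h := congrArg (Polynomial.evalRingHom 0) (mehta_det_mat x)
  rw [RingHom.map_det] at h
  rw [← Matrix.det_submatrix_equiv_self (mehtaEquiv n)]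
  have hl : (vandermondeProd x) ^ 4 = (Polynomial.evalRingHom 0) (∏ k : Fin n, ∏ l : Fin n,
      if k < l then
        (Polynomial.C (x l) - Polynomial.C (x k)) *
        (Polynomial.C (x l) + Polynomial.X - Polynomial.C (x k)) *
        (Polynomial.C (x l) - (Polynomial.C (x k) + Polynomial.X)) *
          (Polynomial.C (x l) - Polynomial.C (x k)) else 1) := by
    simp only [vandermondeProd, map_prod, Finset.prod_filter, ← Finset.prod_pow]
    refine Finset.prod_congr rfl fun k _ => Finset.prod_congr rfl fun l _ => ?_
    split_ifs
    · simp
      ring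
    · simp
  rw [hl, ← h]
  congr 1
  ext p q
  rcases q with ⟨b, l⟩
  fin_cases b
  · simp [mehtaMat, mehtaEquiv]
  · have e : (2 * (l : ℕ) + 1) / 2 = l := by omega
    have e' : (2 * (l : ℕ) + 1) % 2 = 1 := by omega
    have g := geom_sum₂_self (x l) (mehtaEquiv n p : ℕ)
    simp only [mehtaEquiv, Equiv.coe_fn_mk] at g
    simp [mehtaMat, mehtaEquiv, Polynomial.eval_finsetSum, e, e', g]
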